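/- Under Assumption 1 and the |H| = 1 hypothesis, assume moreover: (i) no μ ∈ ℝ^m with μ ≥ 0 having at most one nonzero component satisfies both d* + Σ_{i∈M} ξ_i μ_i = 0 and c_1 + Σ_{i∈M} a_{i1} μ_i = 0; (ii) for every I ⊆ M with |I| = 2, the 2×2 matrix whose rows are (ξ_i, 2 a_{i1}) for i ∈ I is invertible, so that for each μ there is a unique solution (x_1^I(μ), w^I(μ)), affine in μ, of the system ξ_i w + 2 a_{i1} x_1 = b_i − 2 Σ_{j≠1} a_{ij} x_j(μ), i ∈ I, where x_j(μ) = −(c_j + Σ_{i∈M} μ_i a_{ij})/(D_{jj} − d*) for j ≠ 1. If for every I ⊆ M with |I| = 2 the convex program: minimize x_1^I(μ)² + Σ_{j≠1} x_j(μ)² − w^I(μ) over μ ∈ ℝ^m subject to μ ≥ 0, d* + Σ_{i∈M} ξ_i μ_i = 0, c_1 + Σ_{i∈M} a_{i1} μ_i = 0, and ξ_i w^I(μ) + 2 a_{i1} x_1^I(μ) + 2 Σ_{j≠1} a_{ij} x_j(μ) ≤ b_i for all i ∈ M \ I, is infeasible or has nonnegative optimal value, then the Shor relaxation is exact, i.e.,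 v* = c*. -/

import Mathlib

/-!
The Shor relaxation is bounded below by the convex relaxation `conv1Val` in the variables `(x, w)`,
where `w` stands for the trace of `X` (`shorObj_ge`). The positive definite combination of the `Aⁱ`
makes the feasible set of that relaxation compact, so it has a minimiser (`exists_conv1_min`). If
`∑ x_j² = w` at the minimiser, then `x` is feasible for the QCQP with the same objective value, and
the relaxation is exact.

Otherwise the only constraints active at the minimiser are linear, and Farkas' lemma (`farkas`)
yields multipliers `μ ≥ 0` supported on the active constraints, with no constraint qualification
(`exists_multiplier`). Stationarity says `x_j = x_j(μ)` for `j ≠ 0`, together with the two equations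
on `μ` of the convex program. Since `μ` has at least two nonzero components, two constraints
`I` are active, and nonsingularity forces `(x_0, w) = (x_1^I(μ), w^I(μ))`. The convex
program for `I` then gives `w ≤ ∑ x_j²`, a contradiction.
-/

/- Common definitions for diagonal QCQPs, the Shor relaxation, and the
convex relaxations, following "Exactness conditions for the Shor relaxation
of diagonal QCQPs". Optimal values are infima in the extended reals. -/

namespace DiagQCQP2011

open Matrix Finset

noncomputable section

/-- Trace inner product `Y • X` of two square matrices. -/
def traceIP {n : ℕ} (Y X : Matrix (Fin n) (Fin n) ℝ) : ℝ :=
  ∑ j, ∑ k, Y j k * X j k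

/-- Objective of the QCQP (P): `xᵀ D x + 2 cᵀ x`. -/
def qObj {n : ℕ} (D : Matrix (Fin n) (Fin n) ℝ) (c : Fin n → ℝ) (x : Fin n → ℝ) : ℝ :=
  (∑ j, ∑ k, x j * D j k * x k) + 2 * ∑ j, c j * x j

/-- Feasibility for the QCQP (P): `xᵀ Aⁱ x + 2 aᵢᵀ x ≤ bᵢ` for all `i`. -/
def qFeas {n m : ℕ} (A : Fin m → Matrix (Fin n) (Fin n) ℝ) (a : Fin m → Fin n → ℝ)
    (b : Fin m → ℝ) (x : Fin n → ℝ) : Prop :=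
  ∀ i, (∑ j, ∑ k, x j * A i j k * x k) + 2 * ∑ j, a i j * x j ≤ b i

/-- Optimal value `c*` of the QCQP (P), as an infimum in the extended reals. -/
def qVal {n m : ℕ} (D : Matrix (Fin n) (Fin n) ℝ) (A : Fin m → Matrix (Fin n) (Fin n) ℝ)
    (c : Fin n → ℝ) (a : Fin m → Fin n → ℝ) (b : Fin m → ℝ) : EReal :=
  sInf {v : EReal | ∃ x : Fin n → ℝ, qFeas A a b x ∧ v = ((qObj D c x : ℝ) : EReal)}

/-- Objective of the Shor relaxation (S): `D • X + 2 cᵀ x`. -/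
def shorObj {n : ℕ} (D : Matrix (Fin n) (Fin n) ℝ) (c : Fin n → ℝ)
    (X : Matrix (Fin n) (Fin n) ℝ) (x : Fin n → ℝ) : ℝ :=
  traceIP D X + 2 * ∑ j, c j * x j

/-- Feasibility for the Shor relaxation (S). -/
def shorFeas {n m : ℕ} (A : Fin m → Matrix (Fin n) (Fin n) ℝ) (a : Fin m → Fin n → ℝ)
    (b : Fin m → ℝ) (X : Matrix (Fin n) (Fin n) ℝ) (x : Fin n → ℝ) : Prop :=
  X.IsSymm ∧ (∀ i, traceIP (A i) X + 2 * ∑ j, a i j * x j ≤ b i) ∧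
    (X - vecMulVec x x).PosSemidef

/-- Optimal value `v*` of the Shor relaxation (S). -/
def shorVal {n m : ℕ} (D : Matrix (Fin n) (Fin n) ℝ) (A : Fin m → Matrix (Fin n) (Fin n) ℝ)
    (c : Fin n → ℝ) (a : Fin m → Fin n → ℝ) (b : Fin m → ℝ) : EReal :=
  sInf {v : EReal | ∃ (X : Matrix (Fin n) (Fin n) ℝ) (x : Fin n → ℝ),
    shorFeas A a b X x ∧ v = ((shorObj D c X x : ℝ) : EReal)}

/-- Strict feasibility (interior point) for the Shor relaxation (S). -/
def shorStrictFeas {n m : ℕ} (A : Fin m → Matrix (Fin n) (Fin n) ℝ) (a : Fin m → Fin n → ℝ)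
    (b : Fin m → ℝ) (X : Matrix (Fin n) (Fin n) ℝ) (x : Fin n → ℝ) : Prop :=
  X.IsSymm ∧ (∀ i, traceIP (A i) X + 2 * ∑ j, a i j * x j < b i) ∧
    (X - vecMulVec x x).PosDef

/-- Assumption 1: (P) is feasible, some nonnegative combination of the `Aⁱ` is
positive definite, and (S) has a strictly feasible (interior) point. -/
def Assumption1 {n m : ℕ} (A : Fin m → Matrix (Fin n) (Fin n) ℝ) (a : Fin m → Fin n → ℝ)
    (b : Fin m → ℝ) : Prop :=
  (∃ x : Fin n → ℝ, qFeas A a b x) ∧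
  (∃ y : Fin m → ℝ, (∀ i, 0 ≤ y i) ∧ (∑ i, y i • A i).PosDef) ∧
  (∃ (X : Matrix (Fin n) (Fin n) ℝ) (x : Fin n → ℝ), shorStrictFeas A a b X x)

/-- Objective of the convex relaxation (C). -/
def convObj {n : ℕ} (D : Matrix (Fin n) (Fin n) ℝ) (c : Fin n → ℝ)
    (x z : Fin n → ℝ) : ℝ :=
  (∑ j, D j j * z j) + 2 * ∑ j, c j * x j

/-- Feasibility for the convex relaxation (C). -/
def convFeas {n m : ℕ} (A : Fin m → Matrix (Fin n) (Fin n) ℝ) (a : Fin m → Fin n → ℝ)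
    (b : Fin m → ℝ) (x z : Fin n → ℝ) : Prop :=
  (∀ i, (∑ j, A i j j * z j) + 2 * ∑ j, a i j * x j ≤ b i) ∧ ∀ j, x j ^ 2 ≤ z j

/-- Optimal value `p*` of the convex relaxation (C). -/
def convVal {n m : ℕ} (D : Matrix (Fin n) (Fin n) ℝ) (A : Fin m → Matrix (Fin n) (Fin n) ℝ)
    (c : Fin n → ℝ) (a : Fin m → Fin n → ℝ) (b : Fin m → ℝ) : EReal :=
  sInf {v : EReal | ∃ x z : Fin n → ℝ,
    convFeas A a b x z ∧ v = ((convObj D c x z : ℝ) : EReal)}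

/-- KKT point of the convex relaxation (C). -/
def KKT {n m : ℕ} (D : Matrix (Fin n) (Fin n) ℝ) (A : Fin m → Matrix (Fin n) (Fin n) ℝ)
    (c : Fin n → ℝ) (a : Fin m → Fin n → ℝ) (b : Fin m → ℝ)
    (x z : Fin n → ℝ) (μ : Fin m → ℝ) (ν : Fin n → ℝ) : Prop :=
  (∀ i, 0 ≤ μ i) ∧ (∀ j, 0 ≤ ν j) ∧
  (∀ j, D j j + (∑ i, μ i * A i j j) - ν j = 0) ∧
  (∀ j, c j + (∑ i, μ i * a i j) + ν j * x j = 0) ∧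
  convFeas A a b x z ∧
  (∀ i, μ i * (b i - (∑ j, A i j j * z j) - 2 * ∑ j, a i j * x j) = 0) ∧
  (∀ j, ν j * (z j - x j ^ 2) = 0)

/-- The polyhedral set `S_k` of multipliers, whose emptiness (for all `k`)
is the exactness condition of Burer–Ye. -/
def Sk {n m : ℕ} (D : Matrix (Fin n) (Fin n) ℝ) (A : Fin m → Matrix (Fin n) (Fin n) ℝ)
    (c : Fin n → ℝ) (a : Fin m → Fin n → ℝ) (k : Fin n) : Set (Fin m → ℝ) :=
  {μ | (∀ i, 0 ≤ μ i) ∧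
       D k k + (∑ i, μ i * A i k k) = 0 ∧
       c k + (∑ i, μ i * a i k) = 0 ∧
       ∀ j, j ≠ k → 0 ≤ D j j + (∑ i, μ i * A i j j)}

/-- Partition hypothesis: `{N_h}` partitions `N`, within each class all
constraint matrices have a common diagonal value `ξ^{ih}`, and in each class the
minimal diagonal entry of `D` is attained at the unique index `j_h`. -/
def PartitionHyp {n m : ℕ} {H : Type*} (D : Matrix (Fin n) (Fin n) ℝ)
    (A : Fin m → Matrix (Fin n) (Fin n) ℝ) (Nh : H → Finset (Fin n))
    (ξ : Fin m → H → ℝ) (jh : H → Fin n) : Prop :=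
  (∀ j : Fin n, ∃! h : H, j ∈ Nh h) ∧
  (∀ i h, ∀ j ∈ Nh h, A i j j = ξ i h) ∧
  (∀ h, jh h ∈ Nh h) ∧
  (∀ h, ∀ j ∈ Nh h, j ≠ jh h → D (jh h) (jh h) < D j j)

/-- Objective of the second convex relaxation (C'). -/
def conv2Obj {n : ℕ} {H : Type*} [Fintype H] (D : Matrix (Fin n) (Fin n) ℝ)
    (c : Fin n → ℝ) (Nh : H → Finset (Fin n)) (jh : H → Fin n)
    (x : Fin n → ℝ) (w : H → ℝ) : ℝ :=
  (∑ h, D (jh h) (jh h) * w h) +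
    (∑ h, ∑ j ∈ Nh h, (D j j - D (jh h) (jh h)) * x j ^ 2) + 2 * ∑ j, c j * x j

/-- Feasibility for the second convex relaxation (C'). -/
def conv2Feas {n m : ℕ} {H : Type*} [Fintype H] (ξ : Fin m → H → ℝ)
    (a : Fin m → Fin n → ℝ) (b : Fin m → ℝ) (Nh : H → Finset (Fin n))
    (x : Fin n → ℝ) (w : H → ℝ) : Prop :=
  (∀ i, (∑ h, ξ i h * w h) + 2 * ∑ j, a i j * x j ≤ b i) ∧
  ∀ h, (∑ j ∈ Nh h, x j ^ 2) ≤ w h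

/-- Optimal value `q*` of the second convex relaxation (C'). -/
def conv2Val {n m : ℕ} {H : Type*} [Fintype H] (D : Matrix (Fin n) (Fin n) ℝ)
    (ξ : Fin m → H → ℝ) (c : Fin n → ℝ) (a : Fin m → Fin n → ℝ) (b : Fin m → ℝ)
    (Nh : H → Finset (Fin n)) (jh : H → Fin n) : EReal :=
  sInf {v : EReal | ∃ (x : Fin n → ℝ) (w : H → ℝ),
    conv2Feas ξ a b Nh x w ∧ v = ((conv2Obj D c Nh jh x w : ℝ) : EReal)}

/-- KKT point of the second convex relaxation (C'). -/
def KKT2 {n m : ℕ} {H : Type*} [Fintype H] (D : Matrix (Fin n) (Fin n) ℝ)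
    (ξ : Fin m → H → ℝ) (c : Fin n → ℝ) (a : Fin m → Fin n → ℝ) (b : Fin m → ℝ)
    (Nh : H → Finset (Fin n)) (jh : H → Fin n)
    (x : Fin n → ℝ) (w : H → ℝ) (μ : Fin m → ℝ) (γ : H → ℝ) : Prop :=
  (∀ i, 0 ≤ μ i) ∧ (∀ h, 0 ≤ γ h) ∧
  (∀ h, D (jh h) (jh h) + (∑ i, μ i * ξ i h) - γ h = 0) ∧
  (∀ h, ∀ j ∈ Nh h,
    (D j j - D (jh h) (jh h)) * x j + c j + (∑ i, μ i * a i j) + γ h * x j = 0) ∧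
  conv2Feas ξ a b Nh x w ∧
  (∀ i, μ i * (b i - (∑ h, ξ i h * w h) - 2 * ∑ j, a i j * x j) = 0) ∧
  (∀ h, γ h * (w h - ∑ j ∈ Nh h, x j ^ 2) = 0)

/-- Objective of the second convex relaxation (C') in the case `|H| = 1`
(with `j_1 = 0` scaled out; `d* = D 0 0`). -/
def conv1Obj {n : ℕ} [NeZero n] (D : Matrix (Fin n) (Fin n) ℝ) (c : Fin n → ℝ)
    (x : Fin n → ℝ) (w : ℝ) : ℝ :=
  D 0 0 * w + (∑ j, (D j j - D 0 0) * x j ^ 2) + 2 * ∑ j, c j * x j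

/-- Feasibility for the second convex relaxation (C') in the case `|H| = 1`. -/
def conv1Feas {n m : ℕ} (ξ : Fin m → ℝ) (a : Fin m → Fin n → ℝ) (b : Fin m → ℝ)
    (x : Fin n → ℝ) (w : ℝ) : Prop :=
  (∀ i, ξ i * w + 2 * ∑ j, a i j * x j ≤ b i) ∧ (∑ j, x j ^ 2) ≤ w

/-- Optimal value `q*` of the second convex relaxation (C') in the case `|H| = 1`. -/
def conv1Val {n m : ℕ} [NeZero n] (D : Matrix (Fin n) (Fin n) ℝ) (ξ : Fin m → ℝ)
    (c : Fin n → ℝ) (a : Fin m → Fin n → ℝ) (b : Fin m → ℝ) : EReal :=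
  sInf {v : EReal | ∃ (x : Fin n → ℝ) (w : ℝ),
    conv1Feas ξ a b x w ∧ v = ((conv1Obj D c x w : ℝ) : EReal)}

/-- The function `x_j(μ)` from the paper (meaningful for `j ≠ 0`, `|H| = 1`). -/
def xmu {n m : ℕ} [NeZero n] (D : Matrix (Fin n) (Fin n) ℝ) (c : Fin n → ℝ)
    (a : Fin m → Fin n → ℝ) (μ : Fin m → ℝ) (j : Fin n) : ℝ :=
  -(c j + ∑ i, μ i * a i j) / (D j j - D 0 0)

end


/-! ### Farkas' lemma -/

/-- **Farkas' lemma** for finitely many linear functionals on a real vector space, by induction on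
their number. -/
lemma farkas {V ι : Type*} [AddCommGroup V] [Module ℝ V] [DecidableEq ι] (S : Finset ι) :
    ∀ (f : ι → V →ₗ[ℝ] ℝ) (g : V →ₗ[ℝ] ℝ),
      (∀ v, (∀ i ∈ S, 0 ≤ f i v) → 0 ≤ g v) →
      ∃ μ : ι → ℝ, (∀ i, 0 ≤ μ i) ∧ ∀ v, g v = ∑ i ∈ S, μ i * f i v := by
  induction S using Finset.induction_on with
  | empty =>
    intro f g h
    refine ⟨fun _ => 0, fun _ => le_rfl, fun v => ?_⟩
    have h1 := h v (by simp)
    have h2 := h (-v) (by simp)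
    rw [map_neg] at h2
    simp only [Finset.sum_empty]
    linarith
  | insert k T hk ih =>
    intro f g h
    by_cases hT : ∀ v, (∀ i ∈ T, 0 ≤ f i v) → 0 ≤ g v
    · obtain ⟨μ, hμ, hg⟩ := ih f g hT
      refine ⟨fun i => if i = k then 0 else μ i, fun i => ?_, fun v => ?_⟩
      · dsimp only
        split_ifs
        exacts [le_rfl, hμ i]
      · rw [Finset.sum_insert hk, hg v]
        dsimp only
        rw [if_pos rfl, zero_mul, zero_add]
        refine Finset.sum_congr rfl fun i hi => ?_
        rw [if_neg (ne_of_mem_of_not_mem hi hk)]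
    · push Not at hT
      obtain ⟨u, hu, hgu⟩ := hT
      have hku : f k u < 0 := by
        by_contra hc
        refine absurd (h u fun i hi => ?_) (not_le.2 hgu)
        rcases Finset.mem_insert.1 hi with rfl | hi
        exacts [not_lt.1 hc, hu i hi]
      -- `v₀` is `u` rescaled so that `v ↦ v + f k v • v₀` projects onto the kernel of `f k`.
      obtain ⟨v₀, hk0, hT0, hg0⟩ :
          ∃ v₀, f k v₀ = -1 ∧ (∀ i ∈ T, 0 ≤ f i v₀) ∧ g v₀ < 0 := by
        have hp : 0 < (-f k u)⁻¹ := inv_pos.2 (by linarith)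
        refine ⟨(-f k u)⁻¹ • u, ?_, fun i hi => ?_, ?_⟩
        · rw [map_smul, smul_eq_mul]
          have := hku.ne
          field_simp
        · rw [map_smul, smul_eq_mul]
          exact mul_nonneg hp.le (hu i hi)
        · rw [map_smul, smul_eq_mul]
          exact mul_neg_of_pos_of_neg hp hgu
      obtain ⟨μ, hμ, hg⟩ := ih (fun i => f i + (f i v₀) • f k) (g + (g v₀) • f k) (by
        intro v hv
        have hv' := h (v + f k v • v₀) (fun i hi => by
          rcases Finset.mem_insert.1 hi with rfl | hi
          · simp [hk0]
          · have := hv i hi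
            simp only [LinearMap.add_apply, LinearMap.smul_apply, smul_eq_mul, map_add,
              map_smul] at this ⊢
            linarith)
        simp only [LinearMap.add_apply, LinearMap.smul_apply, smul_eq_mul, map_add,
          map_smul] at hv' ⊢
        linarith)
      refine ⟨fun i => if i = k then (∑ i ∈ T, μ i * f i v₀) - g v₀ else μ i,
        fun i => ?_, fun v => ?_⟩
      · dsimp only
        split_ifs
        · have := Finset.sum_nonneg fun i hi => mul_nonneg (hμ i) (hT0 i hi)
          linarith
        · exact hμ i
      · have h1 := hg v
        simp only [LinearMap.add_apply, LinearMap.smul_apply, smul_eq_mul, mul_add,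
          Finset.sum_add_distrib] at h1
        have h2 : ∑ i ∈ T, (if i = k then (∑ i ∈ T, μ i * f i v₀) - g v₀ else μ i) * f i v
            = ∑ i ∈ T, μ i * f i v :=
          Finset.sum_congr rfl fun i hi => by rw [if_neg (ne_of_mem_of_not_mem hi hk)]
        have h3 : ∑ i ∈ T, μ i * (f i v₀ * f k v) = (∑ i ∈ T, μ i * f i v₀) * f k v := by
          rw [Finset.sum_mul]
          exact Finset.sum_congr rfl fun i _ => by ring
        rw [Finset.sum_insert hk]
        dsimp only
        rw [if_pos rfl, h2]
        rw [h3] at h1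
        linarith

/-! ### Comparison of the relaxations -/

lemma traceIP_diag {n : ℕ} {Y : Matrix (Fin n) (Fin n) ℝ} (hY : Y.IsDiag)
    (X : Matrix (Fin n) (Fin n) ℝ) : traceIP Y X = ∑ j, Y j j * X j j := by
  refine Finset.sum_congr rfl fun j _ => Finset.sum_eq_single j (fun k _ hk => ?_) (by simp)
  rw [hY (Ne.symm hk), zero_mul]

lemma quad_diag {n : ℕ} {Y : Matrix (Fin n) (Fin n) ℝ} (hY : Y.IsDiag) (x : Fin n → ℝ) :
    ∑ j, ∑ k, x j * Y j k * x k = ∑ j, Y j j * x j ^ 2 := by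
  refine Finset.sum_congr rfl fun j _ =>
    (Finset.sum_eq_single j (fun k _ hk => ?_) (by simp)).trans (by ring)
  rw [hY (Ne.symm hk), mul_zero, zero_mul]

/-- The rank-one lift `X = x xᵀ` shows that the Shor relaxation is a relaxation. -/
lemma shorVal_le_qVal {n m : ℕ} (D : Matrix (Fin n) (Fin n) ℝ)
    (A : Fin m → Matrix (Fin n) (Fin n) ℝ)
    (c : Fin n → ℝ) (a : Fin m → Fin n → ℝ) (b : Fin m → ℝ) :
    shorVal D A c a b ≤ qVal D A c a b := by
  have key : ∀ (Y : Matrix (Fin n) (Fin n) ℝ) (x : Fin n → ℝ),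
      traceIP Y (vecMulVec x x) = ∑ j, ∑ k, x j * Y j k * x k := fun Y x =>
    Finset.sum_congr rfl fun j _ => Finset.sum_congr rfl fun k _ => by
      rw [vecMulVec_apply]; ring
  refine sInf_le_sInf ?_
  rintro v ⟨x, hx, rfl⟩
  refine ⟨vecMulVec x x, x, ⟨?_, fun i => ?_, ?_⟩, ?_⟩
  · ext i j
    simp [vecMulVec_apply, mul_comm]
  · rw [key]; exact hx i
  · rw [sub_self]; exact Matrix.PosSemidef.zero
  · rw [shorObj, key, qObj]

/-- Setting `w = tr X` turns a Shor-feasible point into a feasible point of the convex relaxation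
whose objective is no larger. -/
lemma shorObj_ge {n m : ℕ} [NeZero n] {D : Matrix (Fin n) (Fin n) ℝ} (hD : D.IsDiag)
    {A : Fin m → Matrix (Fin n) (Fin n) ℝ} (hA : ∀ i, (A i).IsDiag)
    (c : Fin n → ℝ) {a : Fin m → Fin n → ℝ} {b : Fin m → ℝ}
    {ξ : Fin m → ℝ} (hξ : ∀ i j, A i j j = ξ i) (hmin : ∀ j : Fin n, j ≠ 0 → D 0 0 < D j j)
    {X : Matrix (Fin n) (Fin n) ℝ} {x : Fin n → ℝ} (h : shorFeas A a b X x) :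
    ∃ w, conv1Feas ξ a b x w ∧ conv1Obj D c x w ≤ shorObj D c X x := by
  obtain ⟨_, hf, hp⟩ := h
  have hX : ∀ j, x j ^ 2 ≤ X j j := fun j => by
    have := hp.diag_nonneg (i := j)
    simp only [Matrix.sub_apply, vecMulVec_apply] at this
    nlinarith
  refine ⟨∑ j, X j j, ⟨fun i => ?_, Finset.sum_le_sum fun j _ => hX j⟩, ?_⟩
  · have := hf i
    rw [traceIP_diag (hA i)] at this
    simpa only [hξ, Finset.mul_sum] using this
  · rw [shorObj, traceIP_diag hD, conv1Obj, Finset.mul_sum, ← Finset.sum_add_distrib]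
    gcongr with j
    have hj : D 0 0 ≤ D j j := by
      by_cases h0 : j = 0
      · rw [h0]
      · exact (hmin j h0).le
    nlinarith [mul_le_mul_of_nonneg_left (hX j) (sub_nonneg.2 hj)]

/-! ### Minimisers and multipliers of the convex relaxation -/

/-- A nonnegative combination of the constraints with positive quadratic part bounds `w`, and hence
`x`, so the convex relaxation attains its minimum. -/
lemma exists_conv1_min {n m : ℕ} [NeZero n] (D : Matrix (Fin n) (Fin n) ℝ) (c : Fin n → ℝ)
    {a : Fin m → Fin n → ℝ} {b : Fin m → ℝ} {ξ : Fin m → ℝ}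
    {y : Fin m → ℝ} (hy : ∀ i, 0 ≤ y i) (hyξ : 0 < ∑ i, y i * ξ i)
    (hne : ∃ x w, conv1Feas ξ a b x w) :
    ∃ x w, conv1Feas ξ a b x w ∧
      ∀ x' w', conv1Feas ξ a b x' w' → conv1Obj D c x w ≤ conv1Obj D c x' w' := by
  set K : Set ((Fin n → ℝ) × ℝ) := {p | conv1Feas ξ a b p.1 p.2} with hK
  set Y := ∑ i, y i * ξ i with hY
  set B := ∑ i, y i * b i with hB
  set p : Fin n → ℝ := fun j => ∑ i, y i * a i j with hp
  set R := 2 / Y * (B + 2 / Y * ∑ j, p j ^ 2) with hR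
  have hbound : ∀ x w, conv1Feas ξ a b x w → w ≤ R := by
    rintro x w ⟨h1, h2⟩
    have e1 : Y * w + 2 * ∑ j, p j * x j ≤ B := by
      have e : Y * w + 2 * ∑ j, p j * x j = ∑ i, y i * (ξ i * w + 2 * ∑ j, a i j * x j) := by
        have e' : ∑ j, p j * x j = ∑ i, y i * ∑ j, a i j * x j := by
          simp only [hp, Finset.sum_mul, Finset.mul_sum]
          rw [Finset.sum_comm]
          exact Finset.sum_congr rfl fun i _ => Finset.sum_congr rfl fun j _ => by ring
        rw [e', hY, Finset.sum_mul, Finset.mul_sum, ← Finset.sum_add_distrib]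
        exact Finset.sum_congr rfl fun i _ => by ring
      rw [e]
      exact Finset.sum_le_sum fun i _ => mul_le_mul_of_nonneg_left (h1 i) (hy i)
    have e2 : -(2 * ∑ j, p j * x j) ≤ 2 / Y * ∑ j, p j ^ 2 + Y / 2 * ∑ j, x j ^ 2 := by
      simp only [Finset.mul_sum, ← Finset.sum_add_distrib, ← Finset.sum_neg_distrib]
      refine Finset.sum_le_sum fun j _ => ?_
      have : 2 / Y * p j ^ 2 + Y / 2 * x j ^ 2 + 2 * (p j * x j)
          = 2 / Y * (p j + Y / 2 * x j) ^ 2 := by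
        field_simp
        ring
      have h0 : 0 ≤ 2 / Y * (p j + Y / 2 * x j) ^ 2 := by positivity
      linarith
    have e3 : Y / 2 * ∑ j, x j ^ 2 ≤ Y / 2 * w := mul_le_mul_of_nonneg_left h2 (by positivity)
    have e4 : Y / 2 * w ≤ B + 2 / Y * ∑ j, p j ^ 2 := by linarith
    calc w = 2 / Y * (Y / 2 * w) := by field_simp
      _ ≤ R := mul_le_mul_of_nonneg_left e4 (by positivity)
  have hsub : K ⊆ Set.Icc ((fun _ => -(R + 1)), 0) ((fun _ => R + 1), R) := by
    rintro ⟨x, w⟩ hx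
    have hw := hbound x w hx
    have hxj : ∀ j, x j ^ 2 ≤ w := fun j =>
      (Finset.single_le_sum (fun j _ => sq_nonneg (x j)) (Finset.mem_univ j)).trans hx.2
    refine ⟨⟨fun j => ?_, ?_⟩, ⟨fun j => ?_, hw⟩⟩
    · have := hxj j
      show -(R + 1) ≤ x j
      nlinarith
    · exact (sq_nonneg (x 0)).trans (hxj 0)
    · have := hxj j
      show x j ≤ R + 1
      nlinarith
  have hcl : IsClosed K := by
    have : K = (⋂ i, {p : (Fin n → ℝ) × ℝ | ξ i * p.2 + 2 * ∑ j, a i j * p.1 j ≤ b i}) ∩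
        {p | ∑ j, p.1 j ^ 2 ≤ p.2} := by
      ext p
      simp [hK, conv1Feas]
    rw [this]
    exact (isClosed_iInter fun i => isClosed_le (by fun_prop) (by fun_prop)).inter
      (isClosed_le (by fun_prop) (by fun_prop))
  have hcomp : IsCompact K := isCompact_Icc.of_isClosed_subset hcl hsub
  obtain ⟨x₀, w₀, h₀⟩ := hne
  obtain ⟨⟨x, w⟩, hx, hm⟩ := hcomp.exists_isMinOn (f := fun p => conv1Obj D c p.1 p.2)
    ⟨(x₀, w₀), h₀⟩ (by unfold conv1Obj; fun_prop)
  exact ⟨x, w, hx, fun x' w' h' => hm (show (x', w') ∈ K from h')⟩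

/-- At a minimiser with `∑ x_j² < w`, nonnegative multipliers supported on the active linear
constraints exist. -/
lemma exists_multiplier {n m : ℕ} [NeZero n] {D : Matrix (Fin n) (Fin n) ℝ} {c : Fin n → ℝ}
    {a : Fin m → Fin n → ℝ} {b : Fin m → ℝ} {ξ : Fin m → ℝ} {x : Fin n → ℝ} {w : ℝ}
    (hf : conv1Feas ξ a b x w)
    (hopt : ∀ x' w', conv1Feas ξ a b x' w' → conv1Obj D c x w ≤ conv1Obj D c x' w')
    (hlt : ∑ j, x j ^ 2 < w) :
    ∃ μ : Fin m → ℝ, (∀ i, 0 ≤ μ i) ∧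
      (∀ i, μ i ≠ 0 → ξ i * w + 2 * ∑ j, a i j * x j = b i) ∧
      D 0 0 + (∑ i, ξ i * μ i) = 0 ∧
      ∀ j, (D j j - D 0 0) * x j + (c j + ∑ i, μ i * a i j) = 0 := by
  classical
  -- The constraints and the first-order part of the objective are functionals of this shape.
  let L : ℝ → (Fin n → ℝ) → ((Fin n → ℝ) × ℝ) →ₗ[ℝ] ℝ := fun α β =>
    { toFun := fun p => α * p.2 + 2 * ∑ j, β j * p.1 j
      map_add' := fun p q => by
        simp only [Prod.fst_add, Prod.snd_add, Pi.add_apply, mul_add, Finset.sum_add_distrib]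
        ring
      map_smul' := fun r p => by
        simp only [Prod.smul_fst, Prod.smul_snd, Pi.smul_apply, smul_eq_mul, RingHom.id_apply,
          mul_add, Finset.mul_sum]
        congr 1
        · ring
        · exact Finset.sum_congr rfl fun j _ => by ring }
  have hL : ∀ α β d e, L α β (d, e) = α * e + 2 * ∑ j, β j * d j := fun _ _ _ _ => rfl
  set S : Finset (Fin m) := Finset.univ.filter fun i => ξ i * w + 2 * ∑ j, a i j * x j = b i with hS
  set β : Fin n → ℝ := fun j => (D j j - D 0 0) * x j + c j with hβ
  obtain ⟨μ, hμ, hg⟩ := farkas S (fun i => -L (ξ i) (a i)) (L (D 0 0) β) (by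
    rintro ⟨d, e⟩ hd
    have hlin : ∀ i (t : ℝ), ξ i * (w + t * e) + 2 * ∑ j, a i j * (x j + t * d j)
        = (ξ i * w + 2 * ∑ j, a i j * x j) + t * L (ξ i) (a i) (d, e) := fun i t => by
      have h1 : ∑ j, a i j * (x j + t * d j) = ∑ j, a i j * x j + t * ∑ j, a i j * d j := by
        rw [Finset.mul_sum, ← Finset.sum_add_distrib]
        exact Finset.sum_congr rfl fun j _ => by ring
      rw [hL, h1]
      ring
    have hobj : ∀ t : ℝ, conv1Obj D c (fun j => x j + t * d j) (w + t * e)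
        = conv1Obj D c x w + t * (L (D 0 0) β (d, e) + t * ∑ j, (D j j - D 0 0) * d j ^ 2) :=
      fun t => by
        have h1 : ∑ j, (D j j - D 0 0) * (x j + t * d j) ^ 2 + 2 * ∑ j, c j * (x j + t * d j)
            = ∑ j, (D j j - D 0 0) * x j ^ 2 + 2 * ∑ j, c j * x j
              + t * (2 * ∑ j, β j * d j + t * ∑ j, (D j j - D 0 0) * d j ^ 2) := by
          simp only [hβ, Finset.mul_sum, ← Finset.sum_add_distrib]
          exact Finset.sum_congr rfl fun j _ => by ring
        simp only [conv1Obj, hL]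
        linarith
    -- Small positive steps in the direction `(d, e)` stay feasible.
    have hfeas : ∀ᶠ t : ℝ in nhdsWithin 0 (Set.Ioi 0),
        conv1Feas ξ a b (fun j => x j + t * d j) (w + t * e) := by
      refine Filter.Eventually.and (Filter.eventually_all.2 fun i => ?_) ?_
      · by_cases hi : i ∈ S
        · filter_upwards [self_mem_nhdsWithin] with t ht
          have h1 := hd i hi
          have h2 : ξ i * w + 2 * ∑ j, a i j * x j = b i := (Finset.mem_filter.1 hi).2
          rw [LinearMap.neg_apply] at h1
          rw [hlin, h2]
          nlinarith [show (0 : ℝ) < t from ht]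
        · have hi' : ξ i * w + 2 * ∑ j, a i j * x j < b i :=
            lt_of_le_of_ne (hf.1 i) fun h => hi (Finset.mem_filter.2 ⟨Finset.mem_univ i, h⟩)
          have hc : Continuous fun t : ℝ =>
              ξ i * (w + t * e) + 2 * ∑ j, a i j * (x j + t * d j) := by fun_prop
          have := hc.continuousAt.eventually_lt (x₀ := 0) continuousAt_const
            (show _ < b i by simpa using hi')
          exact (this.filter_mono nhdsWithin_le_nhds).mono fun t ht => ht.le
      · have hc : Continuous fun t : ℝ => ∑ j, (x j + t * d j) ^ 2 := by fun_prop
        have hc' : Continuous fun t : ℝ => w + t * e := by fun_prop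
        have := hc.continuousAt.eventually_lt (x₀ := 0) hc'.continuousAt (by simpa using hlt)
        exact (this.filter_mono nhdsWithin_le_nhds).mono fun t ht => ht.le
    have hlim : Filter.Tendsto
        (fun t : ℝ => L (D 0 0) β (d, e) + t * ∑ j, (D j j - D 0 0) * d j ^ 2)
        (nhdsWithin 0 (Set.Ioi 0)) (nhds (L (D 0 0) β (d, e))) := by
      have hc : Continuous fun t : ℝ =>
          L (D 0 0) β (d, e) + t * ∑ j, (D j j - D 0 0) * d j ^ 2 := by fun_prop
      have := hc.tendsto 0
      rw [zero_mul, add_zero] at this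
      exact this.mono_left nhdsWithin_le_nhds
    refine ge_of_tendsto hlim ?_
    filter_upwards [hfeas, self_mem_nhdsWithin] with t ht ht0
    have h1 := hopt _ _ ht
    rw [hobj] at h1
    exact nonneg_of_mul_nonneg_right (by linarith) ht0)
  refine ⟨fun i => if i ∈ S then μ i else 0, fun i => ?_, fun i hi => ?_, ?_, fun j => ?_⟩
  · dsimp only
    split_ifs
    exacts [hμ i, le_rfl]
  · by_cases h : i ∈ S
    · exact (Finset.mem_filter.1 h).2
    · simp [h] at hi
  · have h1 := hg (0, 1)
    simp only [LinearMap.neg_apply, hL] at h1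
    simp only [mul_ite, mul_zero, Finset.sum_ite_mem, Finset.univ_inter]
    simp only [Pi.zero_apply, mul_zero, Finset.sum_const_zero, mul_one, add_zero, mul_neg,
      Finset.sum_neg_distrib] at h1
    rw [h1, neg_add_eq_zero]
    exact Finset.sum_congr rfl fun i _ => mul_comm _ _
  · have h1 := hg (Pi.single j 1, 0)
    simp only [LinearMap.neg_apply, hL] at h1
    simp only [ite_mul, zero_mul, Finset.sum_ite_mem, Finset.univ_inter]
    simp only [Pi.single_apply, mul_ite, mul_one, mul_zero, Finset.sum_ite_eq', Finset.mem_univ,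
      if_true, zero_add, mul_neg, Finset.sum_neg_distrib] at h1
    have h2 : ∑ i ∈ S, μ i * (2 * a i j) = 2 * ∑ i ∈ S, μ i * a i j := by
      rw [Finset.mul_sum]
      exact Finset.sum_congr rfl fun i _ => by ring
    rw [h2] at h1
    simp only [hβ] at h1
    linarith

/-! ### Exactness -/

/-- Proposition 5 of the paper: under Assumption 1 and the
`|H| = 1` hypothesis, assume (i) no nonnegative multiplier vector with at most
one nonzero component satisfies the two equations `d* + Σ_i ξ_i μ_i = 0` and
`c_1 + Σ_i a_{i1} μ_i = 0`, and (ii) for every `I ⊆ M` with `|I| = 2` the 2×2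
system with rows `(ξ_i, 2 a_{i1})`, `i ∈ I`, is nonsingular, with (affine)
solution `(w^I(μ), x_1^I(μ))` of the system
`ξ_i w + 2 a_{i1} x_1 = b_i - 2 Σ_{j≠1} a_{ij} x_j(μ)`, `i ∈ I`.  If for every
such `I` the corresponding convex program is infeasible or has nonnegative
optimal value, then the Shor relaxation is exact: `v* = c*`. -/
theorem statement15 {n m : ℕ} [NeZero n] (hm : 0 < m)
    (D : Matrix (Fin n) (Fin n) ℝ) (hD : D.IsDiag)
    (A : Fin m → Matrix (Fin n) (Fin n) ℝ) (hA : ∀ i, (A i).IsDiag)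
    (c : Fin n → ℝ) (a : Fin m → Fin n → ℝ) (b : Fin m → ℝ)
    (ξ : Fin m → ℝ) (hξ : ∀ i j, A i j j = ξ i)
    (hmin : ∀ j : Fin n, j ≠ 0 → D 0 0 < D j j)
    (hass : Assumption1 A a b)
    (hone : ¬ ∃ μ : Fin m → ℝ, (∀ i, 0 ≤ μ i) ∧
      (∃ i₀ : Fin m, ∀ i, i ≠ i₀ → μ i = 0) ∧
      D 0 0 + (∑ i, ξ i * μ i) = 0 ∧ c 0 + (∑ i, μ i * a i 0) = 0)
    (hinv : ∀ I : Finset (Fin m), I.card = 2 →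
      ∀ w' x' : ℝ, (∀ i ∈ I, ξ i * w' + 2 * a i 0 * x' = 0) → w' = 0 ∧ x' = 0)
    (wI x1I : Finset (Fin m) → (Fin m → ℝ) → ℝ)
    (hsol : ∀ I : Finset (Fin m), I.card = 2 → ∀ μ : Fin m → ℝ, ∀ i ∈ I,
      ξ i * wI I μ + 2 * a i 0 * x1I I μ =
        b i - 2 * ∑ j ∈ Finset.univ \ {(0 : Fin n)}, a i j * xmu D c a μ j)
    (hcond : ∀ I : Finset (Fin m), I.card = 2 →
      (¬ ∃ μ : Fin m → ℝ, (∀ i, 0 ≤ μ i) ∧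
        D 0 0 + (∑ i, ξ i * μ i) = 0 ∧ c 0 + (∑ i, μ i * a i 0) = 0 ∧
        (∀ i ∉ I, ξ i * wI I μ + 2 * a i 0 * x1I I μ +
          2 * ∑ j ∈ Finset.univ \ {(0 : Fin n)}, a i j * xmu D c a μ j ≤ b i)) ∨
      (∀ μ : Fin m → ℝ, ((∀ i, 0 ≤ μ i) ∧
        D 0 0 + (∑ i, ξ i * μ i) = 0 ∧ c 0 + (∑ i, μ i * a i 0) = 0 ∧
        (∀ i ∉ I, ξ i * wI I μ + 2 * a i 0 * x1I I μ +
          2 * ∑ j ∈ Finset.univ \ {(0 : Fin n)}, a i j * xmu D c a μ j ≤ b i)) →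
        0 ≤ x1I I μ ^ 2 + (∑ j ∈ Finset.univ \ {(0 : Fin n)}, xmu D c a μ j ^ 2)
            - wI I μ)) :
    shorVal D A c a b = qVal D A c a b := by
  refine le_antisymm (shorVal_le_qVal D A c a b) ?_
  obtain ⟨⟨x₀, hx₀⟩, ⟨y, hy, hpd⟩, -⟩ := hass
  have hyξ : 0 < ∑ i, y i * ξ i := by
    have := hpd.diag_pos (i := (0 : Fin n))
    simpa [Matrix.sum_apply, hξ] using this
  have hne : ∃ x w, conv1Feas ξ a b x w := by
    refine ⟨x₀, ∑ j, x₀ j ^ 2, fun i => ?_, le_rfl⟩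
    have := hx₀ i
    rw [quad_diag (hA i)] at this
    simpa only [hξ, Finset.mul_sum] using this
  obtain ⟨x, w, hf, hopt⟩ := exists_conv1_min D c hy hyξ hne
  have htight : ∑ j, x j ^ 2 = w := by
    by_contra hneq
    have hlt : ∑ j, x j ^ 2 < w := lt_of_le_of_ne hf.2 hneq
    obtain ⟨μ, hμ, hact, hd, hst⟩ := exists_multiplier hf hopt hlt
    have hst0 : c 0 + ∑ i, μ i * a i 0 = 0 := by simpa using hst 0
    have hxj : ∀ j ∈ Finset.univ \ {(0 : Fin n)}, xmu D c a μ j = x j := fun j hj => by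
      have hj0 : j ≠ 0 := by simpa using hj
      have hpos := hmin j hj0
      rw [xmu, div_eq_iff (by linarith)]
      linarith [hst j]
    have hsplit : ∀ f : Fin n → ℝ, ∑ j, f j = f 0 + ∑ j ∈ Finset.univ \ {(0 : Fin n)}, f j :=
      fun f => Finset.sum_eq_add_sum_sdiff_singleton_of_mem (Finset.mem_univ 0) f
    have hax : ∀ i, ∑ j ∈ Finset.univ \ {(0 : Fin n)}, a i j * xmu D c a μ j
        = ∑ j ∈ Finset.univ \ {(0 : Fin n)}, a i j * x j := fun i =>
      Finset.sum_congr rfl fun j hj => by rw [hxj j hj]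
    obtain ⟨i₁, i₂, hne12, h1, h2⟩ : ∃ i₁ i₂, i₁ ≠ i₂ ∧ μ i₁ ≠ 0 ∧ μ i₂ ≠ 0 := by
      by_contra hcon
      push Not at hcon
      refine hone ⟨μ, hμ, ?_, hd, hst0⟩
      by_cases hz : ∃ i, μ i ≠ 0
      · obtain ⟨i, hi⟩ := hz
        exact ⟨i, fun k hk => hcon i k (Ne.symm hk) hi⟩
      · push Not at hz
        exact ⟨⟨0, hm⟩, fun k _ => hz k⟩
    have hI : ({i₁, i₂} : Finset (Fin m)).card = 2 := Finset.card_pair hne12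
    set I : Finset (Fin m) := {i₁, i₂} with hIdef
    have hactI : ∀ i ∈ I, ξ i * w + 2 * ∑ j, a i j * x j = b i := fun i hi => by
      rcases Finset.mem_insert.1 hi with rfl | hi
      · exact hact _ h1
      · rw [Finset.mem_singleton.1 hi]
        exact hact _ h2
    -- `(w, x 0)` and `(wI I μ, x1I I μ)` solve the same nonsingular system.
    obtain ⟨hw, hx⟩ := hinv I hI (wI I μ - w) (x1I I μ - x 0) fun i hi => by
      have e1 := hsol I hI μ i hi
      have e2 := hactI i hi
      rw [hsplit] at e2
      rw [hax] at e1
      linarith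
    have hw' : wI I μ = w := by linarith
    have hx' : x1I I μ = x 0 := by linarith
    have hfeas : ∀ i ∉ I, ξ i * wI I μ + 2 * a i 0 * x1I I μ +
        2 * ∑ j ∈ Finset.univ \ {(0 : Fin n)}, a i j * xmu D c a μ j ≤ b i := fun i _ => by
      have e := hf.1 i
      rw [hsplit] at e
      rw [hax, hw', hx']
      linarith
    rcases hcond I hI with hno | hnn
    · exact hno ⟨μ, hμ, hd, hst0, hfeas⟩
    · have e := hnn μ ⟨hμ, hd, hst0, hfeas⟩
      rw [hw', hx', Finset.sum_congr rfl fun j hj => by rw [hxj j hj]] at e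
      rw [hsplit] at hlt
      linarith
  have hq : qFeas A a b x := fun i => by
    have := hf.1 i
    rw [quad_diag (hA i)]
    simpa only [hξ, ← htight, Finset.mul_sum] using this
  have hval : qObj D c x = conv1Obj D c x w := by
    rw [qObj, quad_diag hD, conv1Obj, ← htight, Finset.mul_sum (a := D 0 0), ← Finset.sum_add_distrib]
    congr 1
    exact Finset.sum_congr rfl fun j _ => by ring
  refine le_sInf ?_
  rintro v ⟨X, x', hX, rfl⟩
  obtain ⟨w', hf', hle⟩ := shorObj_ge hD hA c hξ hmin hX
  have hle' : qVal D A c a b ≤ ((qObj D c x : ℝ) : EReal) := sInf_le ⟨x, hq, rfl⟩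
  refine hle'.trans (EReal.coe_le_coe_iff.2 ?_)
  rw [hval]
  exact (hopt _ _ hf').trans hle

end DiagQCQP2011
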